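/- Let U² := ⟨(1,0,1,1),(1,1,0,2)⟩_ℝ ⊆ (ℝ/ℤ)⁴. Then the set 𝒮₁(U²) has finite symmetric difference with the set { 1/4 + 1/(4(2s + 3)) : s ∈ ℤ, s ≥ 0 }. -/

import Mathlib

noncomputable section

abbrev Torus (n : ℕ) : Type := Fin n → AddCircle (1 : ℝ)

def torusProj {n : ℕ} (x : Fin n → ℝ) : Torus n := fun i => (x i : AddCircle (1 : ℝ))

def spanTorus {n k : ℕ} (v : Fin k → Fin n → ℤ) : Set (Torus n) :=
  {p | ∃ t : Fin k → ℝ, p = torusProj fun i => ∑ j, t j * (v j i : ℝ)}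

def IsSubtorus {n : ℕ} (k : ℕ) (S : Set (Torus n)) : Prop :=
  ∃ v : Fin k → Fin n → ℤ,
    LinearIndependent ℝ (fun j : Fin k => fun i : Fin n => (v j i : ℝ)) ∧ S = spanTorus v

def IsProperSub {n : ℕ} (S : Set (Torus n)) : Prop :=
  ¬ S ⊆ ⋃ i : Fin n, {x : Torus n | x i = 0}

def DVal {n : ℕ} (S : Set (Torus n)) : ℝ :=
  sInf ((fun x : Torus n => ⨆ i, dist (x i) ((1 / 2 : ℝ) : AddCircle (1 : ℝ))) '' S)

def relSpec1 {n : ℕ} (U : Set (Torus n)) : Set ℝ :=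
  {d | ∃ T : Set (Torus n), IsSubtorus 1 T ∧ IsProperSub T ∧ T ⊆ U ∧ d = DVal T}

def Spec (k n : ℕ) : Set ℝ :=
  {d | ∃ T : Set (Torus n), IsSubtorus k T ∧ IsProperSub T ∧ d = DVal T}

def progSet (d : ℝ) (α β : ℚ) : Set ℝ :=
  {x | ∃ s : ℕ, x = d + 1 / ((α : ℝ) * s + (β : ℝ))}

def U2 : Set (Torus 4) := spanTorus ![![1, 0, 1, 1], ![1, 1, 0, 2]]

/-!
In the coordinates `(a, b, a - b, a + b)` for directions in `U2`, a line with coprime `a` and `b` is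
the curve `α * b - β * a ∈ ℤ` in the plane `(α, β)`. The points of `U2` at distance at most
`(1 + E) / 4` from `(1/2, 1/2, 1/2, 1/2)` form, up to sign and up to swapping `α` and `β`, a single
triangle, which shrinks to `(3/4, 1/2)` as `E` decreases to `0`. By symmetry `0 ≤ b ≤ a`. Comparing
the values of `α * b - β * a` at the vertices with the integers shows that the line comes within
`(1 + E) / 4` of the centre, for `E ≥ 0`, iff one of `r ≤ (2a + b) E`, `4 - r ≤ (2a - b) E`,
`s ≤ (a + 2b) E`, `4 - s ≤ a E` holds, where `r` and `s` are the residues of `2a + b` and `a + 2b`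
modulo `4`. The least such `E` is `0` or `1 / q` with `q` odd, and all large odd `q` arise from
`b ∈ {4, 8}` and `a ≡ 3 mod 4`, for which `q = a + b / 2`.
-/

section Circle

/-- The distance from a point of the circle to `1/2`, whose supremum over the coordinates is the
`L^∞`-distance minimised in `DVal`. -/
def distHalf (x : AddCircle (1 : ℝ)) : ℝ := dist x ((1 / 2 : ℝ) : AddCircle (1 : ℝ))

lemma distHalf_coe_le_iff {x d : ℝ} : distHalf x ≤ d ↔ ∃ m : ℤ, |x - 1 / 2 - m| ≤ d := by
  rw [distHalf, dist_eq_norm, ← AddCircle.coe_sub, UnitAddCircle.norm_eq]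
  exact ⟨fun h => ⟨_, h⟩, fun ⟨m, hm⟩ => (round_le _ m).trans hm⟩

lemma distHalf_neg (x : AddCircle (1 : ℝ)) : distHalf (-x) = distHalf x := by
  have half_neg : -((1 / 2 : ℝ) : AddCircle (1 : ℝ)) = ((1 / 2 : ℝ) : AddCircle (1 : ℝ)) := by
    rw [neg_eq_iff_add_eq_zero, ← AddCircle.coe_add, add_halves, AddCircle.coe_period]
  rw [distHalf, ← half_neg, dist_neg_neg, distHalf]

lemma half_sub_le_abs_sub_intCast {x d : ℝ} (h : distHalf x ≤ d) (m : ℤ) :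
    1 / 2 - d ≤ |x - m| := by
  obtain ⟨k, hk⟩ := distHalf_coe_le_iff.1 h
  rw [abs_le] at hk
  rcases le_or_gt m k with hmk | hkm
  · have : (m : ℝ) ≤ k := mod_cast hmk
    exact le_abs.2 (.inl (by linarith))
  · have : (k : ℝ) + 1 ≤ m := mod_cast hkm
    exact le_abs.2 (.inr (by linarith))

lemma coe_mul_irrational_ne_zero {θ : ℝ} (hθ : Irrational θ) {c : ℤ} (hc : c ≠ 0) :
    ((θ * c : ℝ) : AddCircle (1 : ℝ)) ≠ 0 := by
  rw [Ne, AddCircle.coe_eq_zero_iff]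
  rintro ⟨k, hk⟩
  exact (hθ.mul_intCast hc).ne_int k (by simpa only [zsmul_eq_mul, mul_one] using hk.symm)

end Circle

section Radii

variable {n : ℕ}

/-- The radii `d` for which `S` meets the closed `L^∞`-ball of radius `d` around
`(1/2, …, 1/2)`. -/
def radii (S : Set (Torus n)) : Set ℝ := {d | ∃ x ∈ S, ∀ i, distHalf (x i) ≤ d}

lemma DVal_eq_of_isLeast_radii [NeZero n] {S : Set (Torus n)} {d : ℝ}
    (h : IsLeast (radii S) d) : DVal S = d := by
  have le_iSup (x : Torus n) (i : Fin n) : distHalf (x i) ≤ ⨆ j, distHalf (x j) :=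
    le_ciSup (f := fun j => distHalf (x j)) (Set.finite_range _).bddAbove i
  obtain ⟨⟨x, hxS, hx⟩, hmin⟩ := h
  have least : IsLeast ((fun x : Torus n => ⨆ i, distHalf (x i)) '' S) d :=
    ⟨⟨x, hxS, (ciSup_le hx).antisymm (hmin ⟨x, hxS, le_iSup x⟩)⟩,
      Set.forall_mem_image.2 fun y hy => hmin ⟨y, hy, le_iSup y⟩⟩
  exact least.csInf_eq

end Radii

section Line

variable {n : ℕ}

/-- The closed geodesic through `0` in `(ℝ/ℤ)ⁿ` with integer direction `v`; it degenerates to a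
point for `v = 0`. -/
def lineTorus (v : Fin n → ℤ) : Set (Torus n) := spanTorus fun _ : Fin 1 => v

lemma mem_lineTorus {v : Fin n → ℤ} {x : Torus n} :
    x ∈ lineTorus v ↔ ∃ t : ℝ, x = torusProj fun i => t * v i := by
  refine ⟨fun ⟨t, ht⟩ => ⟨t 0, ?_⟩, fun ⟨t, ht⟩ => ⟨fun _ => t, ?_⟩⟩ <;>
    simpa only [Fin.sum_univ_one] using ht

lemma isSubtorus_one_iff {T : Set (Torus n)} :
    IsSubtorus 1 T ↔ ∃ v : Fin n → ℤ, v ≠ 0 ∧ T = lineTorus v := by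
  have cast_ne_zero (v : Fin n → ℤ) : (fun i => (v i : ℝ)) ≠ 0 ↔ v ≠ 0 := by
    simp only [ne_eq, funext_iff, Pi.zero_apply, Int.cast_eq_zero]
  constructor
  · rintro ⟨v, hv, rfl⟩
    refine ⟨v 0, (cast_ne_zero _).1 (linearIndependent_unique_iff.1 hv), ?_⟩
    rw [lineTorus, ← funext fun j => congrArg v (Subsingleton.elim j 0)]
  · rintro ⟨v, hv, rfl⟩
    exact ⟨fun _ => v, linearIndependent_unique_iff.2 ((cast_ne_zero _).2 hv), rfl⟩

lemma isProperSub_lineTorus {v : Fin n → ℤ} (hv : ∀ i, v i ≠ 0) : IsProperSub (lineTorus v) := by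
  intro h
  obtain ⟨i, hi⟩ := Set.mem_iUnion.1 (h (mem_lineTorus.2 ⟨√2, rfl⟩))
  exact coe_mul_irrational_ne_zero irrational_sqrt_two (hv i) hi

lemma lineTorus_smul {g : ℤ} (hg : g ≠ 0) (v : Fin n → ℤ) :
    lineTorus (g • v) = lineTorus v := by
  have hg' : (g : ℝ) ≠ 0 := mod_cast hg
  ext x
  simp only [mem_lineTorus, Pi.smul_apply, smul_eq_mul, Int.cast_mul]
  refine ⟨fun ⟨t, ht⟩ => ⟨t * g, ?_⟩, fun ⟨t, ht⟩ => ⟨t / g, ?_⟩⟩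
  · simpa only [mul_assoc] using ht
  · simpa only [← mul_assoc, div_mul_cancel₀ _ hg'] using ht

end Line

section LinesInU2

lemma mem_U2_iff {x : Torus 4} : x ∈ U2 ↔ x 2 = x 0 - x 1 ∧ x 3 = x 0 + x 1 := by
  constructor
  · rintro ⟨t, rfl⟩
    simp only [torusProj, Fin.sum_univ_two, ← AddCircle.coe_sub, ← AddCircle.coe_add]
    constructor <;> congr 1
    · simp
    · simp [mul_two, add_assoc]
  · rintro ⟨h2, h3⟩
    obtain ⟨α, hα⟩ := QuotientAddGroup.mk_surjective (x 0)
    obtain ⟨β, hβ⟩ := QuotientAddGroup.mk_surjective (x 1)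
    refine ⟨![α - β, β], funext fun i => ?_⟩
    fin_cases i <;> simp [torusProj, Fin.sum_univ_two, mul_two, ← add_assoc, h2, h3, ← hα, ← hβ]

/-- The line in `U2` with direction `(a, b, a - b, a + b)`. In these coordinates the symmetries of
`U2` act by sign changes and by swapping `a` and `b`. -/
def U2Line (a b : ℤ) : Set (Torus 4) := lineTorus ![a, b, a - b, a + b]

lemma lineTorus_subset_U2_iff {v : Fin 4 → ℤ} :
    lineTorus v ⊆ U2 ↔ v = ![v 0, v 1, v 0 - v 1, v 0 + v 1] := by
  constructor
  · intro h
    have relations := mem_U2_iff.1 (h (mem_lineTorus.2 ⟨√2, rfl⟩))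
    simp only [torusProj, ← AddCircle.coe_sub, ← AddCircle.coe_add] at relations
    have eq_of_coe_eq {c d : ℤ}
        (hcd : ((√2 * c : ℝ) : AddCircle (1 : ℝ)) = ((√2 * d : ℝ) : AddCircle (1 : ℝ))) :
        c = d := by
      by_contra hne
      refine coe_mul_irrational_ne_zero irrational_sqrt_two (sub_ne_zero.2 hne) ?_
      rw [Int.cast_sub, mul_sub, AddCircle.coe_sub, hcd, sub_self]
    have h2 : v 2 = v 0 - v 1 := eq_of_coe_eq (by rw [relations.1]; push_cast; ring_nf)
    have h3 : v 3 = v 0 + v 1 := eq_of_coe_eq (by rw [relations.2]; push_cast; ring_nf)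
    funext i
    fin_cases i <;> simp [h2, h3]
  · intro h x hx
    obtain ⟨t, rfl⟩ := mem_lineTorus.1 hx
    rw [h, mem_U2_iff]
    simp [torusProj, mul_sub, mul_add]

lemma exists_eq_U2Line {T : Set (Torus 4)} (hT : IsSubtorus 1 T) (hU : T ⊆ U2) :
    ∃ a b : ℤ, IsCoprime a b ∧ T = U2Line a b := by
  obtain ⟨v, hv, rfl⟩ := isSubtorus_one_iff.1 hT
  have hdir := lineTorus_subset_U2_iff.1 hU
  have hgcd : 0 < Int.gcd (v 0) (v 1) := by
    rw [Int.gcd_pos_iff]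
    by_contra! h
    exact hv (by rw [hdir, h.1, h.2]; simp)
  obtain ⟨g, a, b, hg, hab, ha, hb⟩ := Int.exists_gcd_one' hgcd
  refine ⟨a, b, Int.isCoprime_iff_gcd_eq_one.2 hab, ?_⟩
  have hsmul : v = (g : ℤ) • ![a, b, a - b, a + b] := by
    rw [hdir, ha, hb]
    simp only [Matrix.smul_cons, Matrix.smul_empty, smul_eq_mul, mul_comm (g : ℤ), sub_mul,
      add_mul]
  rw [hsmul, lineTorus_smul (Int.natCast_ne_zero.2 hg.ne'), U2Line]

lemma DVal_U2Line_mem_relSpec1 {a b : ℤ} (hb : 0 < b) (hba : b < a) :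
    DVal (U2Line a b) ∈ relSpec1 U2 := by
  have coord_ne_zero (i : Fin 4) : ![a, b, a - b, a + b] i ≠ 0 := by
    fin_cases i
    exacts [(hb.trans hba).ne', hb.ne', (sub_pos.2 hba).ne', (add_pos (hb.trans hba) hb).ne']
  refine ⟨U2Line a b, isSubtorus_one_iff.2 ⟨_, fun h => coord_ne_zero 0 (congrFun h 0), rfl⟩,
    isProperSub_lineTorus coord_ne_zero, lineTorus_subset_U2_iff.2 (by simp), rfl⟩

lemma mem_radii_U2Line {a b : ℤ} {d : ℝ} :
    d ∈ radii (U2Line a b) ↔ ∃ t : ℝ, distHalf (t * a : ℝ) ≤ d ∧ distHalf (t * b : ℝ) ≤ d ∧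
      distHalf (t * a - t * b : ℝ) ≤ d ∧ distHalf (t * a + t * b : ℝ) ≤ d := by
  have exists_param : d ∈ radii (U2Line a b) ↔
      ∃ t : ℝ, ∀ i, distHalf ((t * (![a, b, a - b, a + b] i : ℤ) : ℝ)) ≤ d := by
    constructor
    · rintro ⟨x, hx, h⟩
      obtain ⟨t, rfl⟩ := mem_lineTorus.1 hx
      exact ⟨t, h⟩
    · exact fun ⟨t, h⟩ => ⟨_, mem_lineTorus.2 ⟨t, rfl⟩, h⟩
  simp [exists_param, Fin.forall_fin_succ, mul_add, mul_sub]

lemma radii_U2Line_swap (a b : ℤ) : radii (U2Line b a) = radii (U2Line a b) := by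
  ext d
  simp only [mem_radii_U2Line]
  refine exists_congr fun t => ?_
  rw [← neg_sub, AddCircle.coe_neg, distHalf_neg, add_comm (t * (b : ℝ))]
  tauto

lemma radii_U2Line_neg_left (a b : ℤ) : radii (U2Line (-a) b) = radii (U2Line a b) := by
  ext d
  simp only [mem_radii_U2Line]
  refine exists_congr fun t => ?_
  have h1 : t * ((-a : ℤ) : ℝ) = -(t * a) := by push_cast; ring
  rw [h1, ← neg_add', neg_add_eq_sub, ← neg_sub (t * (a : ℝ)), AddCircle.coe_neg, AddCircle.coe_neg,
    AddCircle.coe_neg, distHalf_neg, distHalf_neg, distHalf_neg]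
  tauto

lemma radii_U2Line_abs (a b : ℤ) : radii (U2Line |a| |b|) = radii (U2Line a b) := by
  have abs_left (a b : ℤ) : radii (U2Line |a| b) = radii (U2Line a b) := by
    rcases abs_choice a with h | h <;> rw [h]
    exact radii_U2Line_neg_left a b
  rw [abs_left, radii_U2Line_swap, abs_left, radii_U2Line_swap]

end LinesInU2

section Triangle

variable {a b : ℤ} {E : ℝ}

/-- The line with direction `(a, b, a - b, a + b)` meets the triangle, centred at
`(α, β) = (3/4, 1/2)`, of those points of `U2` within `(1 + E) / 4` of the centre of the torus that
have `1 ≤ α + β` and `β ≤ α`. The line consists of the points where `α * b - β * a` is an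
integer if `a` and `b` are coprime. -/
def HitsTriangle (a b : ℤ) (E : ℝ) : Prop :=
  ∃ (α β : ℝ) (k : ℤ), α * b - β * a = k ∧
    α ≤ (3 + E) / 4 ∧ (1 - E) / 4 ≤ α - β ∧ (5 - E) / 4 ≤ α + β

lemma HitsTriangle.mem_radii (h : HitsTriangle a b E) (hab : IsCoprime a b) (hE : E ≤ 1) :
    (1 + E) / 4 ∈ radii (U2Line a b) := by
  obtain ⟨α, β, k, hk, hα, hsub, hadd⟩ := h
  obtain ⟨u, v, huv⟩ := hab
  have bezout : (u : ℝ) * a + v * b = 1 := mod_cast huv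
  set t : ℝ := u * α + v * β with ht
  have hta : t * a = α - v * k := by rw [ht]; linear_combination α * bezout - v * hk
  have htb : t * b = β + u * k := by rw [ht]; linear_combination β * bezout + u * hk
  rw [mem_radii_U2Line]
  refine ⟨t, ?_, ?_, ?_, ?_⟩ <;> rw [distHalf_coe_le_iff] <;> simp only [hta, htb]
  · exact ⟨-(v * k), by push_cast; rw [abs_le]; constructor <;> linarith⟩
  · exact ⟨u * k, by push_cast; rw [abs_le]; constructor <;> linarith⟩
  · exact ⟨-(v * k) - u * k, by push_cast; rw [abs_le]; constructor <;> linarith⟩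
  · exact ⟨-(v * k) + u * k + 1, by push_cast; rw [abs_le]; constructor <;> linarith⟩

lemma hitsTriangle_or_of_mem_radii (h : (1 + E) / 4 ∈ radii (U2Line a b)) :
    HitsTriangle a b E ∨ HitsTriangle b a E := by
  obtain ⟨t, ha, hb, near_sub, near_add⟩ := mem_radii_U2Line.1 h
  obtain ⟨k, hk⟩ := distHalf_coe_le_iff.1 ha
  obtain ⟨l, hl⟩ := distHalf_coe_le_iff.1 hb
  have far_sub := half_sub_le_abs_sub_intCast near_sub (k - l)
  have far_add := half_sub_le_abs_sub_intCast near_add (k + l + 1)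
  push_cast at far_sub far_add
  rw [abs_le] at hk hl
  rw [le_abs] at far_sub far_add
  set α : ℝ := t * a - k with hα
  set β : ℝ := t * b - l with hβ
  rcases far_add with hadd | hadd <;> rcases far_sub with hsub | hsub
  · exact .inl ⟨α, β, l * a - k * b, by rw [hα, hβ]; push_cast; ring,
      by linarith, by linarith, by linarith⟩
  · exact .inr ⟨β, α, k * b - l * a, by rw [hα, hβ]; push_cast; ring,
      by linarith, by linarith, by linarith⟩
  · exact .inr ⟨1 - β, 1 - α, a - b + l * a - k * b, by rw [hα, hβ]; push_cast; ring,
      by linarith, by linarith, by linarith⟩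
  · exact .inl ⟨1 - α, 1 - β, b - a + k * b - l * a, by rw [hα, hβ]; push_cast; ring,
      by linarith, by linarith, by linarith⟩

lemma HitsTriangle.nonneg (h : HitsTriangle a b E) : 0 ≤ E := by
  obtain ⟨α, β, -, -, hα, hsub, hadd⟩ := h
  linarith

lemma HitsTriangle.residue_le (ha : 0 ≤ a) (hb : 0 ≤ b) (h : HitsTriangle a b E) :
    (((2 * a + b) % 4 : ℤ) : ℝ) ≤ (2 * a + b : ℤ) * E ∨
      ((4 - (2 * a + b) % 4 : ℤ) : ℝ) ≤ (max (2 * a - b) b : ℤ) * E := by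
  obtain ⟨α, β, k, hk, hα, hsub, hadd⟩ := h
  have ha' : (0 : ℝ) ≤ a := mod_cast ha
  have hb' : (0 : ℝ) ≤ b := mod_cast hb
  obtain ⟨w, hw⟩ : ∃ w : ℤ, w = 4 * k + 2 * a - 3 * b := ⟨_, rfl⟩
  have hwαβ : (w : ℝ) = b * (4 * α - 3) - a * (4 * β - 2) := by
    rw [hw]; push_cast; linear_combination -4 * hk
  have upper : (w : ℝ) ≤ (2 * a + b : ℤ) * E := by
    have h₁ : b * (4 * α - 3) ≤ b * E := mul_le_mul_of_nonneg_left (by linarith) hb'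
    have h₂ : a * (-(4 * β - 2)) ≤ a * (2 * E) := mul_le_mul_of_nonneg_left (by linarith) ha'
    push_cast
    linarith
  have lower : -(w : ℝ) ≤ (max (2 * a - b) b : ℤ) * E := by
    have h₁ : a * (4 * β - 2) ≤ a * (4 * α - 3 + E) :=
      mul_le_mul_of_nonneg_left (by linarith) ha'
    rcases le_total b a with hba | hab
    · have h₂ : (a - b) * (4 * α - 3) ≤ (a - b) * E :=
        mul_le_mul_of_nonneg_left (by linarith) (sub_nonneg.2 (mod_cast hba))
      rw [max_eq_left (by linarith)]
      push_cast
      linarith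
    · have h₂ : (b - a) * (-(4 * α - 3)) ≤ (b - a) * E :=
        mul_le_mul_of_nonneg_left (by linarith) (sub_nonneg.2 (mod_cast hab))
      rw [max_eq_right (by linarith)]
      linarith
  rcases (by omega : (2 * a + b) % 4 ≤ w ∨ 4 - (2 * a + b) % 4 ≤ -w) with h | h
  · exact .inl ((Int.cast_le.2 h).trans upper)
  · exact .inr ((Int.cast_le.2 h).trans (by rwa [Int.cast_neg]))

/-- The rescaled coordinates are `U = 4 * α - 3` and `V = 4 * β - 2`. -/
lemma hitsTriangle_of_rescaled {U V : ℝ} {w : ℤ} (hw : b * U - a * V = w)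
    (hdvd : 4 ∣ w - (2 * a + b)) (hU : U ≤ E) (hV : |V| ≤ U + E) : HitsTriangle a b E := by
  obtain ⟨k, hk⟩ := hdvd
  have hk' : (w : ℝ) - (2 * a + b) = 4 * k := mod_cast hk
  obtain ⟨hV₁, hV₂⟩ := abs_le.1 hV
  exact ⟨(3 + U) / 4, (2 + V) / 4, k + b, by push_cast; linarith, by linarith, by linarith,
    by linarith⟩

lemma hitsTriangle_of_residue_le (ha : 0 ≤ a) (hb : 0 ≤ b) (hE : 0 ≤ E)
    (h : (((2 * a + b) % 4 : ℤ) : ℝ) ≤ (2 * a + b : ℤ) * E ∨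
      ((4 - (2 * a + b) % 4 : ℤ) : ℝ) ≤ (max (2 * a - b) b : ℤ) * E) :
    HitsTriangle a b E := by
  have scale {x y : ℤ} (hx : 0 ≤ x) (hy : 0 ≤ y) (hle : (y : ℝ) ≤ x * E) :
      ∃ s : ℝ, 0 ≤ s ∧ s ≤ E ∧ s * x = y := by
    refine ⟨y / x, by positivity, div_le_of_le_mul₀ (by positivity) hE (by rwa [mul_comm]),
      div_mul_cancel_of_imp fun hx₀ => ?_⟩
    rw [hx₀, zero_mul] at hle
    exact hle.antisymm (by positivity)
  -- `b * U - a * V` takes its extreme values on the triangle of size `s` at the three vertices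
  -- `(s, -2 * s)`, `(s, 2 * s)` and `(-s, 0)`, which lie in the triangle of size `E` for `s ≤ E`.
  rcases h with h | h
  · obtain ⟨s, hs, hsE, hsx⟩ := scale (by omega) (by omega) h
    refine hitsTriangle_of_rescaled (U := s) (V := -(2 * s))
      (w := (2 * a + b) % 4) ?_ (by omega) hsE ?_
    · rw [← hsx]; push_cast; ring
    · rw [abs_neg, abs_of_nonneg] <;> linarith
  · obtain ⟨s, hs, hsE, hsx⟩ := scale (by omega) (by omega) h
    rcases max_choice (2 * a - b) b with hmax | hmax <;> rw [hmax] at hsx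
    · refine hitsTriangle_of_rescaled (U := s) (V := 2 * s)
        (w := (2 * a + b) % 4 - 4) ?_ (by omega) hsE ?_
      · push_cast at hsx ⊢; linarith
      · rw [abs_of_nonneg] <;> linarith
    · refine hitsTriangle_of_rescaled (U := -s) (V := 0)
        (w := (2 * a + b) % 4 - 4) ?_ (by omega) (by linarith) ?_
      · push_cast at hsx ⊢; linarith
      · rw [abs_zero]; linarith

lemma hitsTriangle_iff_residue_le (ha : 0 ≤ a) (hb : 0 ≤ b) (hE : 0 ≤ E) :
    HitsTriangle a b E ↔ (((2 * a + b) % 4 : ℤ) : ℝ) ≤ (2 * a + b : ℤ) * E ∨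
      ((4 - (2 * a + b) % 4 : ℤ) : ℝ) ≤ (max (2 * a - b) b : ℤ) * E :=
  ⟨HitsTriangle.residue_le ha hb, hitsTriangle_of_residue_le ha hb hE⟩

end Triangle

section Excess

variable {a b : ℤ} {E : ℝ}

/-- The excesses `E = 4 * d - 1` for which the line with direction `(a, b, a - b, a + b)` meets one
of the two triangles that form, up to sign, the set of points of `U2` within `d` of the centre. -/
def excesses (a b : ℤ) : Set ℝ := {E | HitsTriangle a b E ∨ HitsTriangle b a E}

lemma isLeast_radii_U2Line (hab : IsCoprime a b) {e : ℝ} (he : e ≤ 1)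
    (h : IsLeast (excesses a b) e) : IsLeast (radii (U2Line a b)) ((1 + e) / 4) := by
  refine ⟨?_, fun d hd => ?_⟩
  · rcases h.1 with h | h
    · exact h.mem_radii hab he
    · exact radii_U2Line_swap a b ▸ h.mem_radii hab.symm he
  · have hd' : 4 * d - 1 ∈ excesses a b :=
      hitsTriangle_or_of_mem_radii (by convert hd using 1; ring)
    linarith [h.2 hd']

lemma nonneg_of_mem_excesses (h : E ∈ excesses a b) : 0 ≤ E :=
  h.elim HitsTriangle.nonneg HitsTriangle.nonneg

lemma mem_excesses_iff (hb : 0 ≤ b) (hba : b ≤ a) (hE : 0 ≤ E) {r s : ℤ}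
    (hr : (2 * a + b) % 4 = r) (hs : (a + 2 * b) % 4 = s) :
    E ∈ excesses a b ↔ ((r : ℝ) ≤ (2 * a + b : ℤ) * E ∨ ((4 - r : ℤ) : ℝ) ≤ (2 * a - b : ℤ) * E) ∨
      ((s : ℝ) ≤ (a + 2 * b : ℤ) * E ∨ ((4 - s : ℤ) : ℝ) ≤ a * E) := by
  have ha : 0 ≤ a := hb.trans hba
  have iff₁ := hitsTriangle_iff_residue_le ha hb hE
  have iff₂ := hitsTriangle_iff_residue_le hb ha hE
  rw [max_eq_left (by omega), hr] at iff₁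
  rw [max_eq_right (by omega), add_comm, hs] at iff₂
  exact or_congr iff₁ iff₂

lemma isLeast_excesses_zero (hb : 0 ≤ b) (hba : b ≤ a)
    (h : (2 * a + b) % 4 = 0 ∨ (a + 2 * b) % 4 = 0) : IsLeast (excesses a b) 0 := by
  refine ⟨(mem_excesses_iff hb hba le_rfl rfl rfl).2 ?_, fun E => nonneg_of_mem_excesses⟩
  rcases h with h | h <;> simp [h]

lemma isLeast_excesses_one_div (hb : 0 ≤ b) (hba : b ≤ a) {r s q : ℤ}
    (hr : (2 * a + b) % 4 = r) (hs : (a + 2 * b) % 4 = s) (hr₀ : 0 < r) (hs₀ : 0 < s) (hq : 0 < q)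
    (hle : 2 * a + b ≤ r * q ∧ 2 * a - b ≤ (4 - r) * q ∧ a + 2 * b ≤ s * q ∧ a ≤ (4 - s) * q)
    (heq : 2 * a + b = r * q ∨ 2 * a - b = (4 - r) * q ∨ a + 2 * b = s * q ∨ a = (4 - s) * q) :
    IsLeast (excesses a b) (1 / q) := by
  have hq' : (0 : ℝ) < q := mod_cast hq
  constructor
  · have le_of_eq {N k : ℤ} (h : N = k * q) : (k : ℝ) ≤ N * (1 / q) := by
      rw [h, Int.cast_mul, mul_assoc, mul_one_div_cancel hq'.ne', mul_one]
    refine (mem_excesses_iff hb hba (by positivity) hr hs).2 (or_assoc.2 ?_)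
    exact heq.imp le_of_eq (.imp le_of_eq (.imp le_of_eq le_of_eq))
  · intro E hE
    have hE₀ := nonneg_of_mem_excesses hE
    have one_div_le {N k : ℤ} (hk : 0 < k) (hN : N ≤ k * q) (h : (k : ℝ) ≤ N * E) :
        1 / q ≤ E := by
      have hk' : (0 : ℝ) < k := mod_cast hk
      have hN' : (N : ℝ) ≤ k * q := mod_cast hN
      rw [div_le_iff₀' hq']
      refine le_of_mul_le_mul_left (a := (k : ℝ)) ?_ hk'
      calc (k : ℝ) * 1 ≤ N * E := by rwa [mul_one]
        _ ≤ k * q * E := mul_le_mul_of_nonneg_right hN' hE₀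
        _ = k * (q * E) := mul_assoc ..
    obtain ⟨hle₁, hle₂, hle₃, hle₄⟩ := hle
    rcases (mem_excesses_iff hb hba hE₀ hr hs).1 hE with (h | h) | (h | h)
    · exact one_div_le hr₀ hle₁ h
    · exact one_div_le (by omega) hle₂ h
    · exact one_div_le hs₀ hle₃ h
    · exact one_div_le (by omega) hle₄ h

lemma exists_odd_threshold (hb : 0 ≤ b) (hba : b ≤ a) (hab : ¬(2 ∣ a ∧ 2 ∣ b)) {r s : ℤ}
    (hr : (2 * a + b) % 4 = r) (hs : (a + 2 * b) % 4 = s) (hr₀ : r ≠ 0) (hs₀ : s ≠ 0) :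
    ∃ q : ℤ, 0 < q ∧ q % 2 = 1 ∧
      (2 * a + b ≤ r * q ∧ 2 * a - b ≤ (4 - r) * q ∧ a + 2 * b ≤ s * q ∧ a ≤ (4 - s) * q) ∧
      (2 * a + b = r * q ∨ 2 * a - b = (4 - r) * q ∨ a + 2 * b = s * q ∨ a = (4 - s) * q) := by
  obtain rfl | rfl | rfl : r = 1 ∨ r = 2 ∨ r = 3 := by omega
  all_goals obtain rfl | rfl | rfl : s = 1 ∨ s = 2 ∨ s = 3 := by omega
  · exact ⟨2 * a + b, by omega⟩
  · exact ⟨2 * a + b, by omega⟩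
  · exact ⟨2 * a + b, by omega⟩
  · exact ⟨a + 2 * b, by omega⟩
  · omega
  · exact ⟨a + b / 2, by omega⟩
  · exact ⟨max (2 * a - b) (a + 2 * b), by omega⟩
  · exact ⟨max (2 * a - b) (a / 2 + b), by omega⟩
  · exact ⟨2 * a - b, by omega⟩

lemma exists_odd_isLeast_excesses (hab : IsCoprime a b) (hb : 0 ≤ b) (hba : b ≤ a)
    (hr₀ : (2 * a + b) % 4 ≠ 0) (hs₀ : (a + 2 * b) % 4 ≠ 0) :
    ∃ q : ℤ, 0 < q ∧ q % 2 = 1 ∧ IsLeast (excesses a b) (1 / q) := by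
  have not_both_even : ¬(2 ∣ a ∧ 2 ∣ b) := fun h =>
    Int.prime_two.not_isUnit (hab.isUnit_of_dvd' h.1 h.2)
  obtain ⟨q, hq, hodd, hle, heq⟩ := exists_odd_threshold hb hba not_both_even rfl rfl hr₀ hs₀
  exact ⟨q, hq, hodd, isLeast_excesses_one_div hb hba rfl rfl (by omega) (by omega) hq hle heq⟩

lemma isLeast_excesses_four_mul {c : ℤ} (ha : a % 4 = 3) (hc : 0 ≤ c) (hca : 4 * c ≤ a) :
    IsLeast (excesses a (4 * c)) (1 / (a + 2 * c : ℤ)) :=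
  isLeast_excesses_one_div (r := 2) (s := 3) (by omega) hca (by omega) (by omega) (by omega)
    (by omega) (by omega) (by omega) (by omega)

end Excess

section Spectrum

lemma isLeast_radii_of_isLeast_excesses {a b q : ℤ} (hab : IsCoprime a b) (hq : 0 < q)
    (h : IsLeast (excesses a b) (1 / q)) :
    IsLeast (radii (U2Line a b)) (1 / 4 + 1 / (4 * q)) := by
  have hq' : (1 : ℝ) ≤ q := mod_cast hq
  convert isLeast_radii_U2Line hab (div_le_one_of_le₀ hq' (by positivity)) h using 1
  field_simp

lemma exists_isCoprime_radii_U2Line_eq {a b : ℤ} (hab : IsCoprime a b) :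
    ∃ a' b' : ℤ, IsCoprime a' b' ∧ 0 ≤ b' ∧ b' ≤ a' ∧
      radii (U2Line a b) = radii (U2Line a' b') := by
  have hab' := IsCoprime.abs_abs hab
  rcases le_total |b| |a| with h | h
  · exact ⟨|a|, |b|, hab', abs_nonneg b, h, (radii_U2Line_abs a b).symm⟩
  · exact ⟨|b|, |a|, hab'.symm, abs_nonneg a, h, by rw [radii_U2Line_swap, radii_U2Line_abs]⟩

lemma DVal_U2Line_eq {a b : ℤ} (hab : IsCoprime a b) : DVal (U2Line a b) = 1 / 4 ∨
    ∃ q : ℤ, 0 < q ∧ q % 2 = 1 ∧ DVal (U2Line a b) = 1 / 4 + 1 / (4 * q) := by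
  obtain ⟨a', b', hab', hb, hba, hrad⟩ := exists_isCoprime_radii_U2Line_eq hab
  by_cases h : (2 * a' + b') % 4 = 0 ∨ (a' + 2 * b') % 4 = 0
  · have least := isLeast_radii_U2Line hab' zero_le_one (isLeast_excesses_zero hb hba h)
    rw [← hrad, add_zero] at least
    exact .inl (DVal_eq_of_isLeast_radii least)
  · push Not at h
    obtain ⟨q, hq, hodd, hmin⟩ := exists_odd_isLeast_excesses hab' hb hba h.1 h.2
    have least := isLeast_radii_of_isLeast_excesses hab' hq hmin
    rw [← hrad] at least
    exact .inr ⟨q, hq, hodd, DVal_eq_of_isLeast_radii least⟩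

lemma eq_of_mem_relSpec1_U2 {d : ℝ} (hd : d ∈ relSpec1 U2) :
    d = 1 / 4 ∨ ∃ q : ℤ, 0 < q ∧ q % 2 = 1 ∧ d = 1 / 4 + 1 / (4 * q) := by
  obtain ⟨T, hT, -, hTU, rfl⟩ := hd
  obtain ⟨a, b, hab, rfl⟩ := exists_eq_U2Line hT hTU
  exact DVal_U2Line_eq hab

lemma mem_relSpec1_U2_of_four_mul {a c : ℤ} (ha : a % 4 = 3) (hc : 0 < c) (hca : 4 * c < a)
    (hcop : IsCoprime a (4 * c)) : 1 / 4 + 1 / (4 * ((a + 2 * c : ℤ) : ℝ)) ∈ relSpec1 U2 := by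
  rw [← DVal_eq_of_isLeast_radii (isLeast_radii_of_isLeast_excesses hcop (by omega)
    (isLeast_excesses_four_mul ha hc.le hca.le))]
  exact DVal_U2Line_mem_relSpec1 (by omega) hca

lemma mem_relSpec1_U2_of_odd {q : ℤ} (hq : 15 ≤ q) (hodd : q % 2 = 1) :
    1 / 4 + 1 / (4 * (q : ℝ)) ∈ relSpec1 U2 := by
  have coprime_two_pow {a : ℤ} (ha : a % 4 = 3) (k : ℕ) : IsCoprime a (2 ^ k) :=
    (Int.isCoprime_two_right.2 (Int.odd_iff.2 (by omega))).pow_right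
  rcases (by omega : q % 4 = 1 ∨ q % 4 = 3) with h | h
  · have ha : (q - 2) % 4 = 3 := by omega
    simpa using mem_relSpec1_U2_of_four_mul ha one_pos (by omega) (coprime_two_pow ha 2)
  · have ha : (q - 4) % 4 = 3 := by omega
    simpa using mem_relSpec1_U2_of_four_mul ha two_pos (by omega) (coprime_two_pow ha 3)

end Spectrum

/-- `𝒮₁(U²)` has finite symmetric difference with `1/4 + 1/4Prog(2,3)`. -/
theorem stmt16 :
    (symmDiff (relSpec1 U2)
      {x : ℝ | ∃ s : ℕ, x = 1/4 + 1/(4 * (2 * (s : ℝ) + 3))}).Finite := by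
  have exceptions_finite : ({1 / 4, 1 / 2} ∪
      (fun s : ℕ => 1 / 4 + 1 / (4 * (2 * (s : ℝ) + 3))) '' Set.Iio 6).Finite :=
    (Set.toFinite _).union ((Set.finite_Iio 6).image _)
  refine exceptions_finite.subset ?_
  rintro d (⟨hd, hprog⟩ | ⟨⟨s, rfl⟩, hspec⟩)
  · left
    rcases eq_of_mem_relSpec1_U2 hd with h | ⟨q, hq, hodd, rfl⟩
    · exact .inl h
    · obtain rfl | ⟨s, rfl⟩ : q = 1 ∨ ∃ s : ℕ, q = 2 * s + 3 :=
        or_iff_not_imp_left.2 fun hq₁ => ⟨((q - 3) / 2).toNat, by omega⟩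
      · right; norm_num
      · exact absurd ⟨s, by push_cast; rfl⟩ hprog
  · refine .inr ⟨s, ?_, rfl⟩
    by_contra hs
    rw [Set.mem_Iio, not_lt] at hs
    have hmem := mem_relSpec1_U2_of_odd (q := 2 * s + 3) (by omega) (by omega)
    exact hspec (by push_cast at hmem; exact hmem)
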